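/- arXiv:2009.02477 — 2 statements merged into one kernel-verified Lean document; each statement's English description precedes it below -/
import Mathlib

section
/- Let A be a complex unital Banach algebra, a, b, c ∈ A with a² = a and ab = b. Then the anti-triangular matrix M = [[a,b],[c,0]] has g-Drazin inverse in M₂(A) if and only if bc has g-Drazin inverse in A. -/
open Filter Finset

/-- An element of a complex (Banach) algebra is quasinilpotent if its spectral radius is zero. -/
noncomputable def Quasinilpotent {A : Type*} [Ring A] [Algebra ℂ A] (q : A) : Prop :=
  spectralRadius ℂ q = 0

/-- `a` has a generalized Drazin inverse: some `b` with `ab = ba`, `b = bab`,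
and `a - a²b` quasinilpotent. -/
noncomputable def HasGDrazin {A : Type*} [Ring A] [Algebra ℂ A] (a : A) : Prop :=
  ∃ b : A, a * b = b * a ∧ b = b * a * b ∧ Quasinilpotent (a - a ^ 2 * b)

/-!
By Koliha's criterion, `x` has a g-Drazin inverse exactly when `0` is not an accumulation point of
its spectrum. If `ab = μb` (here `μ = 1`), then `z - M` has Schur complement `S = z - a - z⁻¹bc`,
and `(z - a)(z² - μz - bc) = z(z - μ)S`. So for small `z ≠ 0`, `z ≠ μ`, outside the spectrum of `a`,
`z` belongs to the resolvent set of `M` if and only if `z² - μz` belongs to that of `bc`; by the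
open mapping theorem `z² - μz` runs through a punctured neighbourhood of `0` as `z` does.

In the hard half of the criterion, let `cₖ` be the coefficient of `z⁻ᵏ⁻¹` in the Laurent expansion
of the resolvent at `0`. Then `-c₋₁` is the g-Drazin inverse and `c₀` the spectral idempotent:
`c₋₁c₀ = c₋₁₋ₙcₙ = O(s⁻ⁿrⁿ)` for `r < s` forces `c₋₁c₀ = 0`, and `(xc₀)ⁿ = cₙ = O(rⁿ)` for all small
`r > 0` makes `xc₀` quasinilpotent.
-/

open Asymptotics Metric Set Topology

section CircleIntegral

variable {E F : Type*} [NormedAddCommGroup E] [NormedSpace ℂ E] [CompleteSpace E]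
  [NormedAddCommGroup F] [NormedSpace ℂ F] [CompleteSpace F]

theorem circleIntegral_continuousLinearMap_comp (L : E →L[ℂ] F) {f : ℂ → E} {c : ℂ} {r : ℝ}
    (hf : CircleIntegrable f c r) : (∮ z in C(c, r), L (f z)) = L (∮ z in C(c, r), f z) := by
  simp only [circleIntegral, ← L.intervalIntegral_comp_comm hf.out, map_smul]

theorem two_pi_I_inv_smul_circleIntegral_zpow_smul (c : ℂ) {r : ℝ} (hr : r ≠ 0) (k : ℤ) (v : E) :
    (2 * Real.pi * Complex.I : ℂ)⁻¹ • (∮ z in C(c, r), (z - c) ^ k • v) =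
      if k = -1 then v else 0 := by
  rw [circleIntegral.integral_smul_const]
  split_ifs with hk
  · simp only [hk, zpow_neg_one, circleIntegral.integral_sub_center_inv c hr]
    exact inv_smul_smul₀ Complex.two_pi_I_ne_zero v
  · rw [circleIntegral.integral_sub_zpow_of_ne hk, zero_smul, smul_zero]

end CircleIntegral

section Resolvent

variable {R A : Type*} [CommSemiring R] [Ring A] [Algebra R A] {x : A} {z : R}

theorem mul_resolvent (hz : z ∈ resolventSet R x) :
    x * resolvent x z = z • resolvent x z - 1 := by
  have h := Ring.mul_inverse_cancel _ hz
  rw [sub_mul, ← Algebra.smul_def] at h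
  rw [resolvent, ← h, sub_sub_cancel]

theorem resolvent_mul (hz : z ∈ resolventSet R x) :
    resolvent x z * x = z • resolvent x z - 1 := by
  have h := Ring.inverse_mul_cancel _ hz
  rw [mul_sub, ← Algebra.commutes, ← Algebra.smul_def] at h
  rw [resolvent, ← h, sub_sub_cancel]

end Resolvent

section ResolventMoment

variable {B : Type*} [NormedRing B] [NormedAlgebra ℂ B]

/-- The moment `(2πi)⁻¹ ∮ zᵏ (z - x)⁻¹ dz` of the resolvent over the circle `|z| = r`. When that
circle lies in a punctured disc about `0` contained in the resolvent set, it is the coefficient of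
`z⁻ᵏ⁻¹` in the Laurent expansion of the resolvent there. -/
noncomputable def resolventMoment (x : B) (r : ℝ) (k : ℤ) : B :=
  (2 * Real.pi * Complex.I : ℂ)⁻¹ • ∮ z in C(0, r), z ^ k • resolvent x z

theorem sphere_subset_ball_diff_singleton {X : Type*} [PseudoMetricSpace X] (c : X) {r R : ℝ}
    (hr : r ≠ 0) (hrR : r < R) : sphere c r ⊆ ball c R \ {c} :=
  fun _ hz => ⟨sphere_subset_ball hrR hz, ne_of_mem_sphere hz hr⟩

variable [CompleteSpace B] {x : B} {R r s : ℝ}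

theorem differentiableOn_zpow_smul_resolvent (hx : ball 0 R \ {0} ⊆ resolventSet ℂ x) (k : ℤ) :
    DifferentiableOn ℂ (fun z : ℂ => z ^ k • resolvent x z) (ball 0 R \ {0}) := fun _ hz =>
  ((differentiableAt_zpow.2 (.inl hz.2)).smul
    (spectrum.hasDerivAt_resolvent_const_left (hx hz)).differentiableAt).differentiableWithinAt

theorem circleIntegrable_zpow_smul_resolvent (hx : ball 0 R \ {0} ⊆ resolventSet ℂ x)
    (hr : 0 < r) (hrR : r < R) (k : ℤ) :
    CircleIntegrable (fun z : ℂ => z ^ k • resolvent x z) 0 r :=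
  ((differentiableOn_zpow_smul_resolvent hx k).continuousOn.mono
    (sphere_subset_ball_diff_singleton 0 hr.ne' hrR)).circleIntegrable hr.le

theorem resolventMoment_eq_of_le (hx : ball 0 R \ {0} ⊆ resolventSet ℂ x) (hr : 0 < r)
    (hrs : r ≤ s) (hs : s < R) (k : ℤ) : resolventMoment x s k = resolventMoment x r k := by
  have hdiff := differentiableOn_zpow_smul_resolvent hx k
  have hopen : IsOpen (ball (0 : ℂ) R \ {0}) := isOpen_ball.sdiff isClosed_singleton
  have hannulus : closedBall (0 : ℂ) s \ ball 0 r ⊆ ball 0 R \ {0} := fun z hz =>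
    ⟨closedBall_subset_ball hs hz.1, fun h => hz.2 (h ▸ mem_ball_self hr)⟩
  rw [resolventMoment, Complex.circleIntegral_eq_of_differentiable_on_annulus_off_countable hr hrs
    countable_empty (hdiff.continuousOn.mono hannulus), resolventMoment]
  intro z hz
  exact hdiff.differentiableAt (hopen.mem_nhds
    (hannulus ⟨ball_subset_closedBall hz.1.1, fun h => hz.1.2 (ball_subset_closedBall h)⟩))

theorem resolventMoment_isBigO_zpow (hx : ball 0 R \ {0} ⊆ resolventSet ℂ x) (hr : 0 < r)
    (hrR : r < R) : resolventMoment x r =O[⊤] fun k : ℤ => r ^ k := by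
  obtain ⟨K, hK⟩ := (isCompact_sphere (0 : ℂ) r).exists_bound_of_continuousOn
    ((differentiableOn_zpow_smul_resolvent hx 0).continuousOn.mono
      (sphere_subset_ball_diff_singleton 0 hr.ne' hrR))
  simp only [zpow_zero, one_smul] at hK
  refine isBigO_top.2 ⟨r * K, fun k => ?_⟩
  calc ‖resolventMoment x r k‖
      ≤ r * (r ^ k * K) := by
        refine circleIntegral.norm_two_pi_i_inv_smul_integral_le_of_norm_le_const hr.le
          fun z hz => ?_
        rw [norm_smul, norm_zpow, mem_sphere_zero_iff_norm.1 hz]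
        gcongr
        exact hK z hz
    _ = r * K * ‖r ^ k‖ := by rw [Real.norm_of_nonneg (by positivity)]; ring

theorem commute_resolventMoment (hx : ball 0 R \ {0} ⊆ resolventSet ℂ x) (hr : 0 < r)
    (hrR : r < R) (k : ℤ) : Commute x (resolventMoment x r k) := by
  have hint := circleIntegrable_zpow_smul_resolvent hx hr hrR k
  refine Commute.smul_right ?_ _
  calc x * ∮ z in C(0, r), z ^ k • resolvent x z
      = ∮ z in C(0, r), x * z ^ k • resolvent x z :=
        (circleIntegral_continuousLinearMap_comp (.mul ℂ B x) hint).symm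
    _ = ∮ z in C(0, r), z ^ k • resolvent x z * x := by
        refine circleIntegral.integral_congr hr.le fun z hz => ?_
        have hz := hx (sphere_subset_ball_diff_singleton 0 hr.ne' hrR hz)
        simp only [mul_smul_comm, smul_mul_assoc, mul_resolvent hz, resolvent_mul hz]
    _ = (∮ z in C(0, r), z ^ k • resolvent x z) * x :=
        circleIntegral_continuousLinearMap_comp ((ContinuousLinearMap.mul ℂ B).flip x) hint

theorem mul_resolventMoment (hx : ball 0 R \ {0} ⊆ resolventSet ℂ x) (hr : 0 < r)
    (hrR : r < R) (k : ℤ) :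
    x * resolventMoment x r k = resolventMoment x r (k + 1) - if k = -1 then 1 else 0 := by
  have hsphere := sphere_subset_ball_diff_singleton (0 : ℂ) hr.ne' hrR
  have hint := circleIntegrable_zpow_smul_resolvent hx hr hrR
  have hone : CircleIntegrable (fun z : ℂ => z ^ k • (1 : B)) 0 r :=
    ContinuousOn.circleIntegrable hr.le <| ContinuousOn.smul
      (fun z hz => (continuousAt_zpow₀ z k (.inl (hsphere hz).2)).continuousWithinAt)
      continuousOn_const
  have hmul : x * (∮ z in C(0, r), z ^ k • resolvent x z) =
      (∮ z in C(0, r), z ^ (k + 1) • resolvent x z) - ∮ z in C(0, r), z ^ k • (1 : B) := by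
    rw [← circleIntegral.integral_sub (hint _) hone]
    refine (circleIntegral_continuousLinearMap_comp (.mul ℂ B x) (hint k)).symm.trans
      (circleIntegral.integral_congr hr.le fun z hz => ?_)
    simp only [ContinuousLinearMap.mul_apply', mul_smul_comm, mul_resolvent (hx (hsphere hz)),
      smul_sub, smul_smul, zpow_add_one₀ (hsphere hz).2]
  have hres := two_pi_I_inv_smul_circleIntegral_zpow_smul 0 hr.ne' k (1 : B)
  simp only [sub_zero] at hres
  rw [resolventMoment, mul_smul_comm, hmul, smul_sub, hres, resolventMoment]

theorem pow_mul_resolventMoment (hx : ball 0 R \ {0} ⊆ resolventSet ℂ x) (hr : 0 < r)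
    (hrR : r < R) {k : ℤ} {n : ℕ} (hk : 0 ≤ k ∨ k + n < 0) :
    x ^ n * resolventMoment x r k = resolventMoment x r (k + n) := by
  induction n with
  | zero => simp
  | succ n ih =>
    rw [pow_succ', mul_assoc, ih (by lia), mul_resolventMoment hx hr hrR, if_neg (by lia),
      sub_zero, Nat.cast_succ, add_assoc]

theorem resolventMoment_neg_one_mul_resolventMoment_zero
    (hx : ball 0 R \ {0} ⊆ resolventSet ℂ x) (hr : 0 < r) (hrR : r < R) :
    resolventMoment x r (-1) * resolventMoment x r 0 = 0 := by
  obtain ⟨t, ht, htr⟩ := exists_between hr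
  have hshift (n : ℕ) : resolventMoment x r (-1 - n) * resolventMoment x t n =
      resolventMoment x r (-1) * resolventMoment x r 0 := by
    have hpos := pow_mul_resolventMoment hx hr hrR (k := 0) (n := n) (.inl le_rfl)
    have hneg := pow_mul_resolventMoment hx hr hrR (k := -1 - n) (n := n) (.inr (by lia))
    rw [zero_add] at hpos
    rw [sub_add_cancel] at hneg
    rw [← resolventMoment_eq_of_le hx ht htr.le hrR, ← hpos, ← mul_assoc,
      ← ((commute_resolventMoment hx hr hrR _).pow_left n).eq, hneg]
  have hbound : (fun n : ℕ => resolventMoment x r (-1 - n) * resolventMoment x t n) =O[atTop]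
      fun n : ℕ => r ^ (-1 - n : ℤ) * t ^ (n : ℤ) :=
    ((resolventMoment_isBigO_zpow hx hr hrR).comp_tendsto tendsto_top).mul
      ((resolventMoment_isBigO_zpow hx ht (htr.trans hrR)).comp_tendsto tendsto_top)
  have hlim : Tendsto (fun n : ℕ => r ^ (-1 - n : ℤ) * t ^ (n : ℤ)) atTop (𝓝 0) := by
    have hgeom := (tendsto_pow_atTop_nhds_zero_of_lt_one (div_nonneg ht.le hr.le)
      ((div_lt_one hr).2 htr)).const_mul r⁻¹
    rw [mul_zero] at hgeom
    refine hgeom.congr fun n => ?_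
    rw [zpow_sub₀ hr.ne', zpow_neg_one, zpow_natCast, zpow_natCast, div_pow]
    ring
  simp only [hshift] at hbound
  exact tendsto_nhds_unique tendsto_const_nhds (hbound.trans_tendsto hlim)

end ResolventMoment

section Quasinilpotent

theorem quasinilpotent_iff_forall_mem_resolventSet {A : Type*} [Ring A] [Algebra ℂ A] {q : A} :
    Quasinilpotent q ↔ ∀ z : ℂ, z ≠ 0 → z ∈ resolventSet ℂ q := by
  simp only [Quasinilpotent, spectralRadius, ENNReal.iSup_eq_zero, ENNReal.coe_eq_zero,
    nnnorm_eq_zero]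
  exact forall_congr' fun z => by rw [spectrum, Set.mem_compl_iff, not_imp_comm]

variable {B : Type*} [NormedRing B] [NormedAlgebra ℂ B] [CompleteSpace B]

theorem norm_le_of_mem_spectrum_of_pow_isBigO {q : B} {r : ℝ} (hr : 0 ≤ r)
    (hq : (fun n : ℕ => q ^ n) =O[atTop] fun n => r ^ n) {z : ℂ} (hz : z ∈ spectrum ℂ q) :
    ‖z‖ ≤ r := by
  by_contra! hrz
  have hzq : (fun n : ℕ => ‖z‖ ^ n) =O[atTop] fun n => q ^ n :=
    isBigO_of_le' (c := ‖(1 : B)‖) _ fun n => by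
      simpa [mul_comm] using spectrum.norm_le_norm_mul_of_mem (spectrum.pow_mem_pow q n hz)
  have hzz : (fun n : ℕ => ‖z‖ ^ n) =o[atTop] fun n => ‖z‖ ^ n :=
    (hzq.trans hq).trans_isLittleO (isLittleO_pow_pow_of_lt_left hr hrz)
  exact isLittleO_irrefl (.of_forall fun n => pow_ne_zero n (hr.trans_lt hrz).ne') hzz

theorem quasinilpotent_of_pow_isBigO {q : B}
    (hq : ∀ᶠ r in 𝓝[>] (0 : ℝ), (fun n : ℕ => q ^ n) =O[atTop] fun n => r ^ n) :
    Quasinilpotent q := by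
  refine quasinilpotent_iff_forall_mem_resolventSet.2 fun z hz => ?_
  obtain ⟨r, hqr, hr, hrz⟩ := (hq.and (Ioo_mem_nhdsGT (norm_pos_iff.2 hz))).exists
  by_contra hmem
  exact (norm_le_of_mem_spectrum_of_pow_isBigO hr.le hqr hmem).not_gt hrz

end Quasinilpotent

section Koliha

/-- `z * d - (1 - x * d)` inverts `z - x` up to a unit: `d` is the inverse of `x` on the range of
`x * d`, while `x` and `x - x ^ 2 * d` agree on the range of `1 - x * d`. -/
theorem algebraMap_sub_mul_smul_sub_one_sub {R A : Type*} [CommSemiring R] [Ring A]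
    [Algebra R A] {x d : A} (hxd : Commute x d) (hd : d = d * x * d) (z : R) :
    (algebraMap R A z - x) * (z • d - (1 - x * d)) =
      (algebraMap R A z - (x - x ^ 2 * d)) * (z • d - 1) := by
  have hxdd : x * (d * d) = d := by rw [← mul_assoc, hxd.eq, ← hd]
  simp only [Algebra.algebraMap_eq_smul_one, sub_mul, mul_sub, smul_mul_assoc, mul_smul_comm,
    one_mul, mul_one, pow_two, mul_assoc, hxdd, smul_sub]
  abel

variable {B : Type*} [NormedRing B] [NormedAlgebra ℂ B] [CompleteSpace B] {x : B}

theorem HasGDrazin.eventually_mem_resolventSet (h : HasGDrazin x) :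
    ∀ᶠ z in 𝓝[≠] (0 : ℂ), z ∈ resolventSet ℂ x := by
  obtain ⟨d, hxd, hd, hq⟩ := h
  replace hxd : Commute x d := hxd
  rw [quasinilpotent_iff_forall_mem_resolventSet] at hq
  have hunit : ∀ᶠ z : ℂ in 𝓝 0, IsUnit (z • d - 1) := by
    have hcont : Continuous fun z : ℂ => z • d - 1 := by fun_prop
    exact hcont.continuousAt.eventually_mem (Units.isOpen.mem_nhds (by simp))
  filter_upwards [hunit.filter_mono nhdsWithin_le_nhds, self_mem_nhdsWithin] with z hz hz0
  have hcomm : Commute (algebraMap ℂ B z - x) (z • d - (1 - x * d)) :=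
    (Algebra.commute_algebraMap_left z _).sub_left <| (hxd.smul_right z).sub_right <|
      (Commute.one_right x).sub_right ((Commute.refl x).mul_right hxd)
  refine (hcomm.isUnit_mul_iff.1 ?_).1
  rw [algebraMap_sub_mul_smul_sub_one_sub hxd hd]
  exact (hq z hz0).mul hz

theorem hasGDrazin_of_ball_diff_singleton_subset_resolventSet {R : ℝ} (hR : 0 < R)
    (hx : ball 0 R \ {0} ⊆ resolventSet ℂ x) : HasGDrazin x := by
  obtain ⟨s, hs, hsR⟩ := exists_between hR
  set p := resolventMoment x s 0
  set d := -resolventMoment x s (-1) with hd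
  have hcomm : Commute x d := (commute_resolventMoment hx hs hsR (-1)).neg_right
  have hxd : x * d = 1 - p := by
    rw [hd, mul_neg, mul_resolventMoment hx hs hsR, if_pos rfl, neg_add_cancel, neg_sub]
  have hdp : d * p = 0 := by
    rw [hd, neg_mul, resolventMoment_neg_one_mul_resolventMoment_zero hx hs hsR, neg_zero]
  have hdxd : d * x * d = d := by rw [mul_assoc, hxd, mul_sub, hdp, mul_one, sub_zero]
  have hidem : IsIdempotentElem p := by
    have h : (1 - p) * p = 0 := by rw [← hxd, mul_assoc, hdp, mul_zero]
    rw [sub_mul, one_mul, sub_eq_zero] at h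
    exact h.symm
  have hxp : x - x ^ 2 * d = x * p := by
    rw [pow_two, mul_assoc, hxd, mul_sub, mul_one, sub_sub_cancel]
  have hpow (n : ℕ) (hn : n ≠ 0) : (x * p) ^ n = resolventMoment x s n := by
    rw [(commute_resolventMoment hx hs hsR 0).mul_pow, hidem.pow_eq hn,
      pow_mul_resolventMoment hx hs hsR (.inl le_rfl), zero_add]
  refine ⟨d, hcomm, hdxd.symm, hxp ▸ quasinilpotent_of_pow_isBigO ?_⟩
  filter_upwards [Ioo_mem_nhdsGT hs] with r ⟨hr, hrs⟩
  refine ((resolventMoment_isBigO_zpow hx hr (hrs.trans hsR)).comp_tendsto tendsto_top).congr' ?_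
    (.of_forall fun n => zpow_natCast r n)
  filter_upwards [eventually_ne_atTop 0] with n hn
  rw [hpow n hn, resolventMoment_eq_of_le hx hr hrs.le hsR, Function.comp_apply]

theorem hasGDrazin_iff_eventually_mem_resolventSet :
    HasGDrazin x ↔ ∀ᶠ z in 𝓝[≠] (0 : ℂ), z ∈ resolventSet ℂ x := by
  refine ⟨HasGDrazin.eventually_mem_resolventSet, fun h => ?_⟩
  obtain ⟨R, hR, hx⟩ := mem_nhdsWithin_iff.1 h
  exact hasGDrazin_of_ball_diff_singleton_subset_resolventSet hR hx

theorem hasGDrazin_matrix_iff_eventually_mem_resolventSet {n : Type*} [Fintype n] [DecidableEq n]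
    {M : Matrix n n B} :
    HasGDrazin M ↔ ∀ᶠ z in 𝓝[≠] (0 : ℂ), z ∈ resolventSet ℂ M := by
  let _ : NormedRing (Matrix n n B) := Matrix.linftyOpNormedRing
  let _ : NormedAlgebra ℂ (Matrix n n B) := Matrix.linftyOpNormedAlgebra
  have hcomplete : CompleteSpace (n → n → B) := inferInstance
  exact @hasGDrazin_iff_eventually_mem_resolventSet (Matrix n n B) _ _ hcomplete M

end Koliha

theorem HasGDrazin.of_isIdempotentElem {A : Type*} [Ring A] [Algebra ℂ A] {e : A}
    (he : IsIdempotentElem e) : HasGDrazin e := by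
  refine ⟨e, rfl, by rw [he.eq, he.eq], ?_⟩
  rw [he.pow_eq two_ne_zero, he.eq, sub_self]
  exact spectrum.spectralRadius_zero

section SchurComplement

variable {A : Type*} [Ring A]

theorem isUnit_matrix_diagonal_iff {p : A} (s : Aˣ) : IsUnit !![p, 0; 0, ↑s] ↔ IsUnit p := by
  constructor
  · rintro ⟨⟨D, E, hDE, hED⟩, rfl⟩
    have hr := congrFun₂ hDE 0 0
    have hl := congrFun₂ hED 0 0
    simp only [Matrix.mul_apply, Fin.sum_univ_two, Matrix.one_apply_eq, Matrix.of_apply,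
      Matrix.cons_val_zero, Matrix.cons_val_one, Matrix.cons_val', zero_mul, mul_zero,
      add_zero] at hr hl
    exact ⟨⟨p, E 0 0, hr, hl⟩, rfl⟩
  · rintro ⟨u, rfl⟩
    refine ⟨⟨_, !![↑u⁻¹, 0; 0, ↑s⁻¹], ?_, ?_⟩, rfl⟩ <;> simp [Matrix.one_fin_two]

theorem isUnit_matrix_iff_isUnit_schurComplement (p q r : A) (s : Aˣ) :
    IsUnit !![p, q; r, ↑s] ↔ IsUnit (p - q * ↑s⁻¹ * r) := by
  have hupper : IsUnit !![1, q * ↑s⁻¹; 0, 1] := by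
    refine ⟨⟨_, !![1, -(q * ↑s⁻¹); 0, 1], ?_, ?_⟩, rfl⟩ <;> simp [Matrix.one_fin_two]
  have hlower : IsUnit !![1, 0; ↑s⁻¹ * r, 1] := by
    refine ⟨⟨_, !![1, 0; -(↑s⁻¹ * r), 1], ?_, ?_⟩, rfl⟩ <;> simp [Matrix.one_fin_two]
  have hLDU : !![p, q; r, ↑s] = !![1, q * ↑s⁻¹; 0, 1] *
      !![p - q * ↑s⁻¹ * r, 0; 0, ↑s] * !![1, 0; ↑s⁻¹ * r, 1] := by
    simp [mul_assoc]
  rw [hLDU, hlower.mul_right_iff, hupper.mul_left_iff, isUnit_matrix_diagonal_iff]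

variable {𝕜 : Type*} [Field 𝕜] [Algebra 𝕜 A]

theorem mem_resolventSet_antitriangular_iff_isUnit (a b c : A) {z : 𝕜} (hz : z ≠ 0) :
    z ∈ resolventSet 𝕜 !![a, b; c, 0] ↔ IsUnit (algebraMap 𝕜 A z - a - z⁻¹ • (b * c)) := by
  let s : Aˣ := Units.map (algebraMap 𝕜 A) (Units.mk0 z hz)
  have hs : (↑s⁻¹ : A) = algebraMap 𝕜 A z⁻¹ := rfl
  have hM : algebraMap 𝕜 (Matrix (Fin 2) (Fin 2) A) z - !![a, b; c, 0] =
      !![algebraMap 𝕜 A z - a, -b; -c, ↑s] := by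
    ext i j
    fin_cases i <;> fin_cases j <;> simp [Matrix.algebraMap_matrix_apply, s]
  rw [spectrum.mem_resolventSet_iff, hM, isUnit_matrix_iff_isUnit_schurComplement, hs,
    ← Algebra.commutes, ← Algebra.smul_def, smul_mul_assoc, neg_mul_neg]

theorem mem_resolventSet_antitriangular_iff {a b : A} (c : A) {μ z : 𝕜} (hab : a * b = μ • b)
    (hz : z ≠ 0) (hzμ : z ≠ μ) (hza : z ∈ resolventSet 𝕜 a) :
    z ∈ resolventSet 𝕜 !![a, b; c, 0] ↔ z ^ 2 - μ * z ∈ resolventSet 𝕜 (b * c) := by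
  have hu : z * (z - μ) ≠ 0 := mul_ne_zero hz (sub_ne_zero.2 hzμ)
  have hfac : (algebraMap 𝕜 A z - a) * (algebraMap 𝕜 A (z ^ 2 - μ * z) - b * c) =
      Units.mk0 _ hu • (algebraMap 𝕜 A z - a - z⁻¹ • (b * c)) := by
    have habc : a * (b * c) = μ • (b * c) := by rw [← mul_assoc, hab, smul_mul_assoc]
    rw [Units.smul_mk0]
    simp only [Algebra.algebraMap_eq_smul_one, sub_mul, mul_sub, smul_mul_assoc, mul_smul_comm,
      one_mul, mul_one, habc, smul_sub, smul_smul]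
    match_scalars <;> field_simp
  rw [mem_resolventSet_antitriangular_iff_isUnit a b c hz,
    ← isUnit_smul_iff (Units.mk0 _ hu), ← hfac, (spectrum.mem_resolventSet_iff.1 hza).mul_left_iff,
    spectrum.mem_resolventSet_iff]

end SchurComplement

section PuncturedNeighborhood

theorem map_nhdsNE_eq_of_analyticAt {f : ℂ → ℂ} {x : ℂ} (hf : AnalyticAt ℂ f x)
    (hne : ∃ᶠ z in 𝓝 x, f z ≠ f x) : map f (𝓝[≠] x) = 𝓝[≠] (f x) := by
  have hnonconst : ¬EventuallyConst f (𝓝 x) := fun h => by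
    obtain ⟨w, hw⟩ := eventuallyConst_iff_exists_eventuallyEq.1 h
    exact hne (hw.mono fun z hz => not_not.2 (hz.trans hw.self_of_nhds.symm))
  have hopen : 𝓝 (f x) ≤ map f (𝓝 x) :=
    hf.eventually_constant_or_nhds_le_map_nhds.resolve_left (not_eventually.2 hne)
  refine (hf.map_nhdsNE hnonconst).antisymm fun s hs => ?_
  have himage : ∀ᶠ w in map f (𝓝 x), w ≠ f x → w ∈ s := by
    refine eventually_map.2 ((eventually_nhdsWithin_iff.1 (Filter.mem_map.1 hs)).mono ?_)
    exact fun z hz hfz => hz fun h => hfz (congrArg f h)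
  exact eventually_nhdsWithin_iff.2 (hopen himage)

theorem map_sq_sub_mul_nhdsNE_zero (μ : ℂ) :
    map (fun z => z ^ 2 - μ * z) (𝓝[≠] 0) = 𝓝[≠] 0 := by
  have hne : ∀ᶠ z in 𝓝[≠] (0 : ℂ), z ^ 2 - μ * z ≠ 0 := by
    filter_upwards [self_mem_nhdsWithin, nhdsNE_le_cofinite 0 (eventually_cofinite_ne μ)]
      with z hz hzμ
    rw [pow_two, ← sub_mul]
    exact mul_ne_zero (sub_ne_zero.2 hzμ) hz
  have hmap := map_nhdsNE_eq_of_analyticAt (x := 0) (f := fun z => z ^ 2 - μ * z) (by fun_prop)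
  simp only [ne_eq, OfNat.ofNat_ne_zero, not_false_eq_true, zero_pow, mul_zero, sub_zero] at hmap
  exact hmap (hne.frequently.filter_mono nhdsWithin_le_nhds)

end PuncturedNeighborhood

theorem stmt13_general {A : Type*} [NormedRing A] [NormedAlgebra ℂ A] [CompleteSpace A]
    {a b : A} (c : A) {μ : ℂ} (ha : HasGDrazin a) (hab : a * b = μ • b) :
    HasGDrazin (!![a, b; c, 0] : Matrix (Fin 2) (Fin 2) A) ↔ HasGDrazin (b * c) := by
  calc HasGDrazin !![a, b; c, 0]
      ↔ ∀ᶠ z in 𝓝[≠] (0 : ℂ), z ∈ resolventSet ℂ !![a, b; c, 0] :=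
        hasGDrazin_matrix_iff_eventually_mem_resolventSet
    _ ↔ ∀ᶠ z in 𝓝[≠] (0 : ℂ), z ^ 2 - μ * z ∈ resolventSet ℂ (b * c) := by
        refine eventually_congr ?_
        filter_upwards [self_mem_nhdsWithin, nhdsNE_le_cofinite 0 (eventually_cofinite_ne μ),
          ha.eventually_mem_resolventSet] with z hz hzμ hza
        exact mem_resolventSet_antitriangular_iff c hab hz hzμ hza
    _ ↔ ∀ᶠ w in 𝓝[≠] (0 : ℂ), w ∈ resolventSet ℂ (b * c) := by
        conv_rhs => rw [← map_sq_sub_mul_nhdsNE_zero μ, eventually_map]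
    _ ↔ HasGDrazin (b * c) := hasGDrazin_iff_eventually_mem_resolventSet.symm

theorem stmt13 {A : Type*} [NormedRing A] [NormedAlgebra ℂ A] [CompleteSpace A]
    (a b c : A) (ha : a * a = a) (hab : a * b = b) :
    HasGDrazin (!![a, b; c, 0] : Matrix (Fin 2) (Fin 2) A) ↔ HasGDrazin (b * c) :=
  stmt13_general c (.of_isIdempotentElem ha) (hab.trans (one_smul ℂ b).symm)
end

section
/- Let A be a complex unital Banach algebra, a ∈ A with g-Drazin inverse a^d, and b, c ∈ A with c·a·a^d = c and a^d·(bc) = (bc)·a^d. Then M = [[a,b],[c,0]] has g-Drazin inverse in M₂(A) if and only if bc has g-Drazin inverse in A. -/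
open Filter Finset

/-!
By Cline's formula (`x * y` is g-Drazin invertible iff `y * x` is), the matrix may be replaced by
the companion matrix `T = !![a, b * c; 1, 0]`. The hypotheses force `a` to commute with `b * c`, so
that `T` commutes with its adjugate `S = !![0, -(b * c); -1, a]`, with `T * S = -(b * c)` and
`T + S = a` as scalar matrices. A second application of Cline's formula shows that `S` is g-Drazin
invertible whenever `T` is. It therefore suffices that for commuting `s` and `t`, g-Drazin
invertibility passes from `s` and `t` to `s * t`, and from `s * t` and `s + t` to `s`.

Bicommutants are closed under inverses and g-Drazin inverses, which reduces these two facts to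
commutative Banach algebras. There `a` is g-Drazin invertible iff some `x` satisfies
`φ a ^ 2 * φ x = φ a` for all characters `φ`: then `a * x` is idempotent modulo the radical, and
idempotents lift along the radical.
-/

section Quasinilpotent

variable {A B : Type*} [Ring A] [Algebra ℂ A] [Ring B] [Algebra ℂ B]

theorem quasinilpotent_iff_spectrum {q : A} : Quasinilpotent q ↔ ∀ k ∈ spectrum ℂ q, k = 0 := by
  simp [Quasinilpotent, spectralRadius]

theorem Quasinilpotent.map {q : A} (hq : Quasinilpotent q) (f : A →ₐ[ℂ] B) :
    Quasinilpotent (f q) := by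
  rw [quasinilpotent_iff_spectrum] at hq ⊢
  exact fun k hk => hq k (AlgHom.spectrum_apply_subset f q hk)

theorem Quasinilpotent.of_map {f : A →ₐ[ℂ] B} [IsLocalHom f] {q : A}
    (hq : Quasinilpotent (f q)) : Quasinilpotent q := by
  rw [quasinilpotent_iff_spectrum] at hq ⊢
  refine fun k hk => hq k fun hu => hk (isUnit_of_map_unit f _ ?_)
  rwa [map_sub, AlgHom.commutes]

theorem Quasinilpotent.smul {q : A} (hq : Quasinilpotent q) (z : ℂ) : Quasinilpotent (z • q) := by
  rw [quasinilpotent_iff_spectrum] at hq ⊢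
  intro k hk
  rcases eq_or_ne z 0 with rfl | hz
  · by_contra hk0
    refine hk (show IsUnit (algebraMap ℂ A k - (0 : ℂ) • q) from ?_)
    simpa only [zero_smul, sub_zero] using (IsUnit.mk0 k hk0).map (algebraMap ℂ A)
  · have hmem : z⁻¹ * k ∈ spectrum ℂ q := by
      rw [← spectrum.smul_mem_smul_iff (r := Units.mk0 z hz)]
      simpa [Units.smul_def, hz] using hk
    simpa [hz] using hq _ hmem

theorem Quasinilpotent.op {q : A} (hq : Quasinilpotent q) : Quasinilpotent (MulOpposite.op q) := by
  rw [quasinilpotent_iff_spectrum] at hq ⊢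
  exact fun k hk => hq k fun hu => hk (isUnit_op.2 hu)

theorem Quasinilpotent.mul_comm {x y : A} (h : Quasinilpotent (x * y)) :
    Quasinilpotent (y * x) := by
  rw [quasinilpotent_iff_spectrum] at h ⊢
  intro k hk
  by_contra hk0
  have hmem : k ∈ spectrum ℂ (x * y) \ {0} := spectrum.nonzero_mul_comm (𝕜 := ℂ) y x ▸ ⟨hk, hk0⟩
  exact hk0 (h k hmem.1)

end Quasinilpotent

section Banach

variable {A : Type*} [NormedRing A] [NormedAlgebra ℂ A] [CompleteSpace A]

theorem summable_norm_pow_of_spectralRadius_lt_one {q : A} (hq : spectralRadius ℂ q < 1) :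
    Summable fun n : ℕ => ‖q ^ n‖ := by
  obtain ⟨r, hqr, hr⟩ := ENNReal.lt_iff_exists_nnreal_btwn.1 hq
  have hroot := (spectrum.pow_nnnorm_pow_one_div_tendsto_nhds_spectralRadius q).eventually
    (gt_mem_nhds hqr)
  refine Summable.of_norm_bounded_eventually_nat (g := fun n => (r : ℝ) ^ n)
    (summable_geometric_of_lt_one r.2 (by exact_mod_cast hr)) ?_
  filter_upwards [hroot, eventually_gt_atTop 0] with n hn hn0
  rw [norm_norm]
  have : (‖q ^ n‖₊ : ENNReal) ≤ (r : ENNReal) ^ n := by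
    rw [← ENNReal.rpow_natCast, ← ENNReal.rpow_inv_le_iff (by positivity), ← one_div]
    exact hn.le
  exact_mod_cast this

theorem Quasinilpotent.summable_norm_pow {q : A} (hq : Quasinilpotent q) :
    Summable fun n : ℕ => ‖q ^ n‖ :=
  summable_norm_pow_of_spectralRadius_lt_one (hq.symm ▸ one_pos)

theorem Quasinilpotent.eq_zero_of_eq_mul_mul {n d z : A} (hn : Quasinilpotent n)
    (h : z = d * z * n) : z = 0 := by
  have hpow (k : ℕ) : z = d ^ k * z * n ^ k := by
    induction k with
    | zero => simp
    | succ k ih =>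
      calc z = d * (d ^ k * z * n ^ k) * n := by rw [← ih, ← h]
        _ = d ^ (k + 1) * z * n ^ (k + 1) := by simp only [pow_succ' d, pow_succ n, mul_assoc]
  have hlim : Tendsto (fun k : ℕ => ‖z‖ * ‖(((‖d‖ : ℝ) : ℂ) • n) ^ (k + 1)‖) atTop (nhds 0) := by
    simpa using ((tendsto_add_atTop_iff_nat 1).2
      (hn.smul (‖d‖ : ℝ)).summable_norm_pow.tendsto_atTop_zero).const_mul ‖z‖
  rw [← norm_le_zero_iff]
  refine ge_of_tendsto' hlim fun k => ?_
  calc ‖z‖ = ‖d ^ (k + 1) * z * n ^ (k + 1)‖ := by rw [← hpow]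
    _ ≤ ‖d ^ (k + 1)‖ * ‖z‖ * ‖n ^ (k + 1)‖ := norm_mul₃_le
    _ ≤ ‖d‖ ^ (k + 1) * ‖z‖ * ‖n ^ (k + 1)‖ := by gcongr; exact norm_pow_le' d k.succ_pos
    _ = ‖z‖ * ‖(((‖d‖ : ℝ) : ℂ) • n) ^ (k + 1)‖ := by
      rw [smul_pow, norm_smul, norm_pow (↑‖d‖ : ℂ), Complex.norm_real, norm_norm]; ring

theorem Quasinilpotent.eq_zero_of_eq_mul_mul' {n d z : A} (hn : Quasinilpotent n)
    (h : z = n * z * d) : z = 0 := by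
  refine MulOpposite.op_injective (hn.op.eq_zero_of_eq_mul_mul (d := MulOpposite.op d) ?_)
  conv_lhs => rw [h]
  simp only [MulOpposite.op_mul, mul_assoc]

theorem commute_gDrazin_of_commute {a d y : A} (had : a * d = d * a) (hd : d = d * a * d)
    (hq : Quasinilpotent (a - a ^ 2 * d)) (hy : Commute y a) : Commute y d := by
  obtain ⟨p, hp⟩ : ∃ p, p = a * d := ⟨_, rfl⟩
  have hp' : p = d * a := hp.trans had
  have hpd : p * d = d := by rw [hp', ← hd]
  have hdp : d * p = d := by rw [hp, ← mul_assoc, ← hd]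
  have hidem : (1 - p) * (1 - p) = 1 - p :=
    IsIdempotentElem.one_sub (show p * p = p by nth_rw 2 [hp']; rw [← mul_assoc, hpd, ← hp'])
  have hap : Commute a (1 - p) :=
    (Commute.one_right a).sub_right (hp ▸ (Commute.refl a).mul_right had)
  replace hq : Quasinilpotent (a * (1 - p)) := by
    convert hq using 1
    rw [hp]; noncomm_ring
  have hleft : p * y * (1 - p) = 0 := by
    refine hq.eq_zero_of_eq_mul_mul (d := d) ?_
    calc p * y * (1 - p) = d * (y * a) * ((1 - p) * (1 - p)) := by
          rw [hidem, hy.eq, hp']; simp only [mul_assoc]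
      _ = d * p * y * ((1 - p) * a * (1 - p)) := by rw [hdp, ← hap.eq]; simp only [mul_assoc]
      _ = d * (p * y * (1 - p)) * (a * (1 - p)) := by simp only [mul_assoc]
  have hright : (1 - p) * y * p = 0 := by
    refine hq.eq_zero_of_eq_mul_mul' (d := d) ?_
    calc (1 - p) * y * p = (1 - p) * (1 - p) * (a * y) * d := by
          rw [hidem, ← hy.eq, hp]; simp only [mul_assoc]
      _ = (1 - p) * ((1 - p) * a) * y * (p * d) := by rw [hpd]; simp only [mul_assoc]
      _ = a * (1 - p) * ((1 - p) * y * p) * d := by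
          rw [← hap.eq, ← mul_assoc (1 - p) a, ← hap.eq]; simp only [mul_assoc]
  have hpy : p * y = y * p := by
    rw [mul_sub, mul_one, sub_eq_zero] at hleft
    rw [sub_mul, sub_mul, one_mul, sub_eq_zero] at hright
    rw [hleft, hright]
  calc y * d = y * p * d := by rw [mul_assoc, hpd]
    _ = d * (a * y) * d := by rw [← hpy, hp']; simp only [mul_assoc]
    _ = d * (y * p) := by rw [← hy.eq, hp]; simp only [mul_assoc]
    _ = d * y := by rw [← hpy, ← mul_assoc, hdp]

end Banach

section GDrazin

variable {A B : Type*} [Ring A] [Algebra ℂ A] [Ring B] [Algebra ℂ B]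

theorem HasGDrazin.map {a : A} (h : HasGDrazin a) (f : A →ₐ[ℂ] B) : HasGDrazin (f a) := by
  obtain ⟨d, had, hd, hq⟩ := h
  refine ⟨f d, ?_, ?_, ?_⟩
  · rw [← map_mul, had, map_mul]
  · rw [← map_mul, ← map_mul, ← hd]
  · simpa using hq.map f

theorem HasGDrazin.neg {a : A} (h : HasGDrazin a) : HasGDrazin (-a) := by
  obtain ⟨d, had, hd, hq⟩ := h
  refine ⟨-d, by simpa using had, by simpa using hd, ?_⟩
  convert hq.smul (-1) using 1
  rw [neg_one_smul]; noncomm_ring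

/-- Cline's formula: the g-Drazin inverse of `y * x` is `y * d ^ 2 * x`, where `d` is that of
`x * y`. -/
theorem HasGDrazin.mul_comm {x y : A} (h : HasGDrazin (x * y)) : HasGDrazin (y * x) := by
  obtain ⟨d, had, hd, hq⟩ := h
  have hxydd : x * y * d * d = d := by rw [had, ← hd]
  have hddxy : d * d * (x * y) = d := by rw [mul_assoc, ← had, ← mul_assoc, ← hd]
  refine ⟨y * d * d * x, ?_, ?_, ?_⟩
  · calc y * x * (y * d * d * x) = y * (x * y * d * d) * x := by simp only [mul_assoc]
      _ = y * (d * d * (x * y)) * x := by rw [hxydd, hddxy]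
      _ = y * d * d * x * (y * x) := by simp only [mul_assoc]
  · calc y * d * d * x = y * (d * d * (x * y)) * (x * y * d * d) * x := by rw [hddxy, hxydd]
      _ = y * d * d * x * (y * x) * (y * d * d * x) := by simp only [mul_assoc]
  · have hswap : y * x - (y * x) ^ 2 * (y * d * d * x) = y * ((1 - x * y * d) * x) := by
      calc y * x - (y * x) ^ 2 * (y * d * d * x)
          = y * x - y * (x * y * (x * y * d * d)) * x := by simp only [pow_two, mul_assoc]
        _ = y * ((1 - x * y * d) * x) := by
          rw [hxydd]; simp only [mul_sub, sub_mul, one_mul, mul_assoc]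
    rw [hswap]
    refine Quasinilpotent.mul_comm ?_
    convert hq using 1
    calc (1 - x * y * d) * x * y = x * y - x * y * (d * (x * y)) := by
          simp only [sub_mul, one_mul, mul_assoc]
      _ = x * y - (x * y) ^ 2 * d := by rw [← had, pow_two]; simp only [mul_assoc]

theorem hasGDrazin_mul_comm {x y : A} : HasGDrazin (x * y) ↔ HasGDrazin (y * x) :=
  ⟨HasGDrazin.mul_comm, HasGDrazin.mul_comm⟩

theorem isLocalHom_of_range_eq_centralizer {f : A →ₐ[ℂ] B} (hf : Function.Injective f) {S : Set B}
    (hS : f.range = Subalgebra.centralizer ℂ S) : IsLocalHom f where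
  map_nonunit a := by
    rintro ⟨u, hu⟩
    have hmem : ∀ s ∈ S, Commute s (u : B) := by
      have : f a ∈ Subalgebra.centralizer ℂ S := hS ▸ ⟨a, rfl⟩
      rwa [← hu, Subalgebra.mem_centralizer_iff] at this
    obtain ⟨b, hb⟩ : (↑u⁻¹ : B) ∈ f.range := by
      rw [hS, Subalgebra.mem_centralizer_iff]
      exact fun s hs => (hmem s hs).units_inv_right
    have hfb : f b = ↑u⁻¹ := hb
    exact ⟨⟨a, b, hf (by rw [map_mul, map_one, ← hu, hfb, u.mul_inv]),
      hf (by rw [map_mul, map_one, ← hu, hfb, u.inv_mul])⟩, rfl⟩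

end GDrazin

theorem hasGDrazin_map_iff {A B : Type*} [Ring A] [Algebra ℂ A] [NormedRing B] [NormedAlgebra ℂ B]
    [CompleteSpace B] {f : A →ₐ[ℂ] B} (hf : Function.Injective f) {S : Set B}
    (hS : f.range = Subalgebra.centralizer ℂ S) {a : A} : HasGDrazin (f a) ↔ HasGDrazin a := by
  refine ⟨fun ⟨e, had, hd, hq⟩ => ?_, fun h => h.map f⟩
  obtain ⟨d, rfl⟩ : e ∈ f.range := by
    have hfa : f a ∈ Subalgebra.centralizer ℂ S := hS ▸ ⟨a, rfl⟩
    rw [Subalgebra.mem_centralizer_iff] at hfa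
    rw [hS, Subalgebra.mem_centralizer_iff]
    exact fun s hs => commute_gDrazin_of_commute had hd hq (hfa s hs)
  have := isLocalHom_of_range_eq_centralizer hf hS
  refine ⟨d, hf (by simpa using had), hf (by simpa using hd), .of_map (f := f) (by simpa using hq)⟩

section Commutative

open WeakDual

variable {B : Type*} [NormedCommRing B] [NormedAlgebra ℂ B] [CompleteSpace B]

theorem quasinilpotent_iff_characterSpace {q : B} :
    Quasinilpotent q ↔ ∀ φ : characterSpace ℂ B, φ q = 0 := by
  rw [quasinilpotent_iff_spectrum]
  simp only [CharacterSpace.mem_spectrum_iff_exists, forall_exists_index, forall_apply_eq_imp_iff]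

theorem summable_norm_catalan_mul_pow {q : B} (hq : Quasinilpotent q) :
    Summable fun n : ℕ => ‖(catalan n : B) * q ^ n‖ := by
  refine .of_nonneg_of_le (fun _ => norm_nonneg _) (fun n => ?_) (hq.smul 4).summable_norm_pow
  have hcatalan : catalan n ≤ 4 ^ n := by
    rw [catalan_eq_centralBinom_div, show 4 ^ n = 2 ^ (2 * n) by rw [pow_mul]; norm_num]
    exact (Nat.div_le_self _ _).trans (Nat.choose_le_two_pow _ _)
  calc ‖(catalan n : B) * q ^ n‖ ≤ catalan n * ‖q ^ n‖ := by
        rw [← nsmul_eq_mul]; exact norm_nsmul_le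
    _ ≤ 4 ^ n * ‖q ^ n‖ := by gcongr; exact_mod_cast hcatalan
    _ = ‖((4 : ℂ) • q) ^ n‖ := by rw [smul_pow, norm_smul, norm_pow (4 : ℂ), RCLike.norm_ofNat]

theorem tsum_catalan_mul_pow_eq {q : B} (hq : Quasinilpotent q) :
    ∑' n, (catalan n : B) * q ^ n = 1 + q * (∑' n, (catalan n : B) * q ^ n) ^ 2 := by
  have hs := summable_norm_catalan_mul_pow hq
  rw [pow_two, tsum_mul_tsum_eq_tsum_sum_antidiagonal_of_summable_norm hs hs,
    ← (summable_norm_sum_mul_antidiagonal_of_summable_norm hs hs).of_norm.tsum_mul_left,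
    hs.of_norm.tsum_eq_zero_add]
  congr 1
  · simp
  · refine tsum_congr fun n => ?_
    rw [catalan_succ', Nat.cast_sum, sum_mul, mul_sum]
    refine sum_congr rfl fun ij hij => ?_
    rw [← mem_antidiagonal.1 hij]
    push_cast
    ring

-- `v - v ^ 2 = q` is solved by the power series `v = q * C(q)`, where `C` is the generating
-- function of the Catalan numbers.
theorem Quasinilpotent.exists_sub_sq_eq {q : B} (hq : Quasinilpotent q) :
    ∃ v : B, Quasinilpotent v ∧ v - v ^ 2 = q := by
  refine ⟨q * ∑' n, (catalan n : B) * q ^ n, ?_, ?_⟩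
  · rw [quasinilpotent_iff_characterSpace] at hq ⊢
    simp [hq]
  · linear_combination q * tsum_catalan_mul_pow_eq hq

theorem Quasinilpotent.isUnit_one_sub {q : B} (hq : Quasinilpotent q) : IsUnit (1 - q) := by
  by_contra hu
  obtain ⟨φ, hφ⟩ := CharacterSpace.exists_apply_eq_zero hu
  simp [quasinilpotent_iff_characterSpace.1 hq φ] at hφ

theorem exists_isIdempotentElem_of_quasinilpotent_sub_sq {g : B} (hg : Quasinilpotent (g - g ^ 2)) :
    ∃ e : B, IsIdempotentElem e ∧ Quasinilpotent (e - g) := by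
  obtain ⟨v, hv, hvg⟩ := hg.exists_sub_sq_eq
  -- `hvg` factors as `(g - v) * (1 - g - v) = 0`; the two factors add up to the unit `1 - 2 * v`.
  obtain ⟨k, hk⟩ := (hv.smul 2).isUnit_one_sub.exists_right_inv
  rw [ofNat_smul_eq_nsmul, nsmul_eq_mul, Nat.cast_ofNat] at hk
  refine ⟨(g - v) * k, ?_, ?_⟩
  · rw [IsIdempotentElem]
    linear_combination (g - v) * k * hk + k ^ 2 * hvg
  · have hfactor : (g - v) * k - g = v * (k * (2 * g - 1)) := by linear_combination g * hk
    rw [quasinilpotent_iff_characterSpace] at hv ⊢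
    intro φ
    rw [hfactor, map_mul, hv, zero_mul]

theorem hasGDrazin_of_quasinilpotent_sub_sq_mul {a x : B} (h : Quasinilpotent (a - a ^ 2 * x)) :
    HasGDrazin a := by
  have hφ (φ : characterSpace ℂ B) : φ a - φ a ^ 2 * φ x = 0 := by
    simpa only [map_sub, map_mul, map_pow] using quasinilpotent_iff_characterSpace.1 h φ
  have hg : Quasinilpotent (a * x - (a * x) ^ 2) := by
    refine quasinilpotent_iff_characterSpace.2 fun φ => ?_
    simp only [map_sub, map_mul, map_pow]
    linear_combination φ x * hφ φ
  obtain ⟨e, he, hn⟩ := exists_isIdempotentElem_of_quasinilpotent_sub_sq hg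
  obtain ⟨l, hl⟩ := hn.isUnit_one_sub.exists_right_inv
  have hal : a * (x * l * e) = e := by linear_combination e * hl + l * he.eq
  refine ⟨x * l * e, mul_comm _ _, ?_, quasinilpotent_iff_characterSpace.2 fun φ => ?_⟩
  · linear_combination (-(x * l * e)) * hal - x * l * he.eq
  · have hφe : φ e = φ a * φ x := by
      simpa only [map_sub, map_mul, sub_eq_zero] using quasinilpotent_iff_characterSpace.1 hn φ
    rw [pow_two, mul_assoc, hal, map_sub, map_mul, hφe]
    linear_combination hφ φ

theorem hasGDrazin_iff_exists_characterSpace {a : B} :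
    HasGDrazin a ↔ ∃ x : B, ∀ φ : characterSpace ℂ B, φ a ^ 2 * φ x = φ a := by
  constructor
  · rintro ⟨d, -, -, hq⟩
    refine ⟨d, fun φ => ?_⟩
    have := quasinilpotent_iff_characterSpace.1 hq φ
    rw [map_sub, map_mul, map_pow, sub_eq_zero] at this
    exact this.symm
  · rintro ⟨x, hx⟩
    refine hasGDrazin_of_quasinilpotent_sub_sq_mul (x := x)
      (quasinilpotent_iff_characterSpace.2 fun φ => ?_)
    rw [map_sub, map_mul, map_pow, hx, sub_self]

theorem HasGDrazin.mul {s t : B} (hs : HasGDrazin s) (ht : HasGDrazin t) : HasGDrazin (s * t) := by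
  rw [hasGDrazin_iff_exists_characterSpace] at hs ht ⊢
  obtain ⟨x, hx⟩ := hs
  obtain ⟨y, hy⟩ := ht
  refine ⟨x * y, fun φ => ?_⟩
  rw [map_mul, map_mul]
  linear_combination φ t ^ 2 * φ y * hx φ + φ s * hy φ

theorem HasGDrazin.of_mul_of_add {s t : B} (hmul : HasGDrazin (s * t)) (hadd : HasGDrazin (s + t)) :
    HasGDrazin s := by
  rw [hasGDrazin_iff_exists_characterSpace] at hmul hadd ⊢
  obtain ⟨x, hx⟩ := hmul
  obtain ⟨y, hy⟩ := hadd
  -- If `φ s ≠ 0`, then `(φ s)⁻¹` is `φ (t * x)` when `φ t ≠ 0` and `φ y` when `φ t = 0`.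
  refine ⟨t * x + y - s * t * x * y, fun φ => ?_⟩
  specialize hx φ
  specialize hy φ
  simp only [map_mul, map_add, map_sub] at hx hy ⊢
  rcases eq_or_ne (φ s) 0 with hs | hs
  · simp [hs]
  rcases eq_or_ne (φ t) 0 with ht | ht
  · simpa [ht] using hy
  have hstx : φ s * φ t * φ x = 1 :=
    mul_left_cancel₀ (mul_ne_zero hs ht) (by linear_combination hx)
  linear_combination (φ s - φ s ^ 2 * φ y) * hstx

end Commutative

section Commuting

universe u

variable {A : Type u} [NormedRing A] [NormedAlgebra ℂ A] [CompleteSpace A]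

theorem exists_commutative_model {S : Set A} (hS : ∀ x ∈ S, ∀ y ∈ S, x * y = y * x) :
    ∃ (B : Type u) (_ : NormedCommRing B) (_ : NormedAlgebra ℂ B) (_ : CompleteSpace B)
      (ι : B →ₐ[ℂ] A), S ⊆ Set.range ι ∧ ∀ b : B, HasGDrazin (ι b) ↔ HasGDrazin b := by
  let C : Subalgebra ℂ A := Subalgebra.centralizer ℂ (Set.centralizer S)
  let _ : NormedCommRing C :=
    { (inferInstance : NormedRing C) with
      mul_comm := fun x y =>
        Subtype.ext (Set.centralizer_centralizer_comm_of_comm hS x x.2 y y.2) }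
  have hclosed : IsClosed (C : Set A) := Set.isClosed_centralizer _
  exact ⟨C, inferInstance, inferInstanceAs (NormedAlgebra ℂ C), hclosed.completeSpace_coe, C.val,
    fun x hx => ⟨⟨x, Set.subset_centralizer_centralizer hx⟩, rfl⟩,
    fun _ => hasGDrazin_map_iff Subtype.val_injective C.range_val⟩

theorem exists_commutative_model_of_commute {s t : A} (h : Commute s t) :
    ∃ (B : Type u) (_ : NormedCommRing B) (_ : NormedAlgebra ℂ B) (_ : CompleteSpace B)
      (ι : B →ₐ[ℂ] A), (∃ x y, ι x = s ∧ ι y = t) ∧ ∀ b : B, HasGDrazin (ι b) ↔ HasGDrazin b := by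
  obtain ⟨B, _, _, _, ι, hrange, hι⟩ := exists_commutative_model (S := {s, t}) (by
    rintro x (rfl | rfl) y (rfl | rfl) <;> simp only [h.eq])
  obtain ⟨x, hx⟩ := hrange (Set.mem_insert s {t})
  obtain ⟨y, hy⟩ := hrange (Set.mem_insert_of_mem s rfl)
  exact ⟨B, ‹_›, ‹_›, ‹_›, ι, ⟨x, y, hx, hy⟩, hι⟩

theorem HasGDrazin.mul_of_commute {s t : A} (h : Commute s t) (hs : HasGDrazin s)
    (ht : HasGDrazin t) : HasGDrazin (s * t) := by
  obtain ⟨B, _, _, _, ι, ⟨x, y, rfl, rfl⟩, hι⟩ := exists_commutative_model_of_commute h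
  rw [hι] at hs ht
  rw [← map_mul, hι]
  exact hs.mul ht

theorem HasGDrazin.of_mul_of_add_of_commute {s t : A} (h : Commute s t)
    (hmul : HasGDrazin (s * t)) (hadd : HasGDrazin (s + t)) : HasGDrazin s := by
  obtain ⟨B, _, _, _, ι, ⟨x, y, rfl, rfl⟩, hι⟩ := exists_commutative_model_of_commute h
  rw [← map_mul, hι] at hmul
  rw [← map_add, hι] at hadd
  exact (hι x).2 (hmul.of_mul_of_add hadd)

end Commuting

section Matrix

open scoped Matrix.Norms.Operator

local instance completeSpace_linftyOp {A n : Type*} [NormedRing A] [CompleteSpace A] [Fintype n]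
    [DecidableEq n] :
    @CompleteSpace (Matrix n n A) Matrix.linftyOpNormedRing.toMetricSpace.toUniformSpace :=
  inferInstanceAs (CompleteSpace (n → n → A))

variable {A : Type*} [NormedRing A] [NormedAlgebra ℂ A] [CompleteSpace A]

theorem hasGDrazin_scalar_iff {n : Type*} [Fintype n] [DecidableEq n] [Nonempty n] {w : A} :
    HasGDrazin (Matrix.scalar n w) ↔ HasGDrazin w := by
  refine hasGDrazin_map_iff (f := Matrix.scalarAlgHom n ℂ)
    (S := Set.range fun ij : n × n => Matrix.single ij.1 ij.2 (1 : A))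
    (fun _ _ => Matrix.scalar_inj.1) ?_
  ext M
  rw [Subalgebra.mem_centralizer_iff, Set.forall_mem_range, Prod.forall]
  exact Matrix.mem_range_scalar_iff_commute_single'

theorem hasGDrazin_companion_iff {a w : A} (h : Commute a w) (ha : HasGDrazin a) :
    HasGDrazin !![a, w; 1, 0] ↔ HasGDrazin w := by
  let T : Matrix (Fin 2) (Fin 2) A := !![a, w; 1, 0]
  let S : Matrix (Fin 2) (Fin 2) A := !![0, -w; -1, a]
  have hTS : T * S = Matrix.scalar (Fin 2) (-w) := by
    ext i j
    fin_cases i <;> fin_cases j <;> simp [T, S, h.eq]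
  have hST : S * T = Matrix.scalar (Fin 2) (-w) := by
    ext i j
    fin_cases i <;> fin_cases j <;> simp [T, S]
  have hadd : T + S = Matrix.scalar (Fin 2) a := by
    ext i j
    fin_cases i <;> fin_cases j <;> simp [T, S]
  have hcomm : Commute T S := hTS.trans hST.symm
  have hswap (hT : HasGDrazin T) : HasGDrazin S := by
    have hTfac : T = !![-1, a; 0, 1] * !![0, -w; 1, 0] := by simp [T]
    have hSfac : S = !![0, -w; 1, 0] * !![-1, a; 0, 1] := by simp [S]
    rw [hSfac]
    exact (hTfac ▸ hT).mul_comm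
  refine ⟨fun hT => ?_, fun hw => HasGDrazin.of_mul_of_add_of_commute hcomm ?_ ?_⟩
  · have hneg : HasGDrazin (-w) :=
      hasGDrazin_scalar_iff.1 (hTS ▸ hT.mul_of_commute hcomm (hswap hT))
    exact neg_neg w ▸ hneg.neg
  · exact hTS ▸ hasGDrazin_scalar_iff.2 hw.neg
  · exact hadd ▸ hasGDrazin_scalar_iff.2 ha

end Matrix

theorem commute_of_mul_mul_eq_self {R : Type*} [Semigroup R] {a d w : R} (had : a * d = d * a)
    (hd : d = d * a * d) (hw : w * a * d = w) (hdw : d * w = w * d) : Commute a w := by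
  have hdwa : d * w * a = w := by rw [hdw, mul_assoc, ← had, ← mul_assoc, hw]
  have hadw : a * d * w = w := by
    calc a * d * w = d * a * (d * w * a) := by rw [hdwa, had]
      _ = d * a * d * w * a := by simp only [mul_assoc]
      _ = w := by rw [← hd, hdwa]
  calc a * w = a * d * w * a := by nth_rw 1 [← hdwa]; simp only [mul_assoc]
    _ = w * a := by rw [hadw]

theorem stmt15_general {A : Type*} [NormedRing A] [NormedAlgebra ℂ A] [CompleteSpace A]
    (a b c : A) (ha : HasGDrazin a) (h : Commute a (b * c)) :
    HasGDrazin (!![a, b; c, 0] : Matrix (Fin 2) (Fin 2) A) ↔ HasGDrazin (b * c) := by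
  have hM : (!![a, b; c, 0] : Matrix (Fin 2) (Fin 2) A) = !![1, 0; 0, c] * !![a, b; 1, 0] := by
    simp
  have hT : !![a, b; 1, 0] * !![1, 0; 0, c] = !![a, b * c; 1, 0] := by simp
  rw [hM, hasGDrazin_mul_comm, hT, hasGDrazin_companion_iff h ha]

theorem stmt15 {A : Type*} [NormedRing A] [NormedAlgebra ℂ A] [CompleteSpace A]
    (a b c ad : A) (h1 : a * ad = ad * a) (h2 : ad = ad * a * ad)
    (h3 : Quasinilpotent (a - a ^ 2 * ad))
    (hc : c * a * ad = c) (hcm : ad * (b * c) = (b * c) * ad) :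
    HasGDrazin (!![a, b; c, 0] : Matrix (Fin 2) (Fin 2) A) ↔ HasGDrazin (b * c) :=
  have hbc : b * c * a * ad = b * c := by simp only [mul_assoc] at hc ⊢; rw [hc]
  stmt15_general a b c ⟨ad, h1, h2, h3⟩ (commute_of_mul_mul_eq_self h1 h2 hbc hcm)
end
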